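/- arXiv:2605.08871 — 2 statements merged into one kernel-verified Lean document; each statement's English description precedes it below -/
import Mathlib

section
/- For every integer T ≥ 1 and every x ∈ ℝ^T, the gradient of the hard-instance chain function is uniformly bounded in sup norm: ‖∇F_T(x)‖_∞ ≤ 23, i.e. |∂_i F_T(x)| ≤ 23 for every coordinate i ∈ {1, …, T}. -/
open MeasureTheory

/-- The scalar function `Ψ` of the hard-instance construction. -/
noncomputable def Psi (t : ℝ) : ℝ :=
  if t ≤ 1 / 2 then 0 else Real.exp (1 - 1 / (2 * t - 1) ^ 2)

/-- The scalar function `Φ(t) = √e ∫_{−∞}^t e^{−τ²/2} dτ` of the hard-instance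
construction. -/
noncomputable def Phi (t : ℝ) : ℝ :=
  Real.sqrt (Real.exp 1) * ∫ τ in Set.Iic t, Real.exp (-τ ^ 2 / 2)

/-- The hard-instance chain function `F_T` on `ℝ^{T+1}` (so the paper's dimension `T ≥ 1`
is `T + 1` here; the paper's coordinate `xᵢ`, `1 ≤ i ≤ T`, is the zero-based coordinate
`x (i−1)`). -/
noncomputable def chainF (T : ℕ) (x : EuclideanSpace ℝ (Fin (T + 1))) : ℝ :=
  -Psi 1 * Phi (x 0) +
    ∑ i : Fin T,
      (Psi (-(x i.castSucc)) * Phi (-(x i.succ)) - Psi (x i.castSucc) * Phi (x i.succ))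

/-- `prog α x` is the largest one-based index `i ∈ {0, 1, …, n}` such that `|xᵢ| > α`
(with the paper's convention `x₀ ≡ 1`, so the value `0` is allowed and returned when no
coordinate exceeds `α`). -/
noncomputable def prog {n : ℕ} (α : ℝ) (x : EuclideanSpace ℝ (Fin n)) : ℕ :=
  (Finset.univ.filter fun i : Fin n => α < |x i|).sup fun i => (i : ℕ) + 1

/-! With the convention `x₀ = 1`, `F_T` is a sum of links `Ψ(-a)Φ(-b) - Ψ(a)Φ(b)` over consecutive
coordinates `(a, b)`, so `∂ᵢF_T` collects one term from the link entering `xᵢ` and one from the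
link leaving it. Since `Ψ` and `Ψ'` vanish on `(-∞, 0]`, at most one of the two products in each
term is nonzero. Hence `|∂ᵢF_T| ≤ sup Ψ · sup Φ' + sup Ψ' · sup Φ`, with `sup Ψ = e`,
`sup Φ' = √e`, `sup Ψ' = √(54/e)` and `sup Φ = √(2πe)`. -/

section ReflectedProducts

variable {f g : ℝ → ℝ}

/-- The link `f (-a) * g (-b) - f a * g b` between consecutive coordinates of the chain function;
the latter uses `f = Ψ`, `g = Φ`. -/
def chainLink (f g : ℝ → ℝ) (a b : ℝ) : ℝ :=
  f (-a) * g (-b) - f a * g b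

/-- The symmetrized product `f (-a) * g (-b) + f a * g b`. Up to sign, the partial derivatives of
`chainLink f g` have this form. -/
def symmProd (f g : ℝ → ℝ) (a b : ℝ) : ℝ :=
  f (-a) * g (-b) + f a * g b

theorem hasFDerivAt_chainLink {E : Type*} [NormedAddCommGroup E] [NormedSpace ℝ E] {u v : E → ℝ}
    {u' v' : E →L[ℝ] ℝ} {x : E} (hf : Differentiable ℝ f) (hg : Differentiable ℝ g)
    (hu : HasFDerivAt u u' x) (hv : HasFDerivAt v v' x) :
    HasFDerivAt (fun y => chainLink f g (u y) (v y))
      (-(symmProd (deriv f) g (u x) (v x) • u' + symmProd f (deriv g) (u x) (v x) • v')) x := by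
  have hfu := (hf (u x)).hasDerivAt.comp_hasFDerivAt x hu
  have hgv := (hg (v x)).hasDerivAt.comp_hasFDerivAt x hv
  have hfu_neg := (hf (-u x)).hasDerivAt.comp_hasFDerivAt x hu.neg
  have hgv_neg := (hg (-v x)).hasDerivAt.comp_hasFDerivAt x hv.neg
  refine ((hfu_neg.mul hgv_neg).sub (hfu.mul hgv)).congr_fderiv ?_
  ext y
  simp only [symmProd, Function.comp_apply, Pi.neg_apply, sub_apply, add_apply, neg_apply,
    smul_apply, smul_eq_mul]
  ring

theorem abs_symmProd_le {C : ℝ} (hf : ∀ t ≤ 0, f t = 0) (hfg : ∀ a b, |f a * g b| ≤ C) (a b : ℝ) :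
    |symmProd f g a b| ≤ C := by
  rcases le_total a 0 with ha | ha
  · simpa [symmProd, hf a ha] using hfg (-a) (-b)
  · simpa [symmProd, hf (-a) (neg_nonpos.2 ha)] using hfg a b

end ReflectedProducts

section Psi

variable {t : ℝ}

theorem Psi_of_le (ht : t ≤ 1 / 2) : Psi t = 0 :=
  if_pos ht

theorem Psi_of_lt (ht : 1 / 2 < t) : Psi t = Real.exp (1 - 1 / (2 * t - 1) ^ 2) :=
  if_neg ht.not_ge

theorem Psi_nonneg (t : ℝ) : 0 ≤ Psi t := by
  unfold Psi
  split_ifs <;> positivity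

theorem Psi_le_exp_one (t : ℝ) : Psi t ≤ Real.exp 1 := by
  rcases le_or_gt t (1 / 2) with ht | ht
  · rw [Psi_of_le ht]
    positivity
  · rw [Psi_of_lt ht]
    gcongr
    exact sub_le_self _ (by positivity)

theorem Psi_le_mul_sq (t : ℝ) : Psi t ≤ Real.exp 1 * (2 * t - 1) ^ 2 := by
  rcases le_or_gt t (1 / 2) with ht | ht
  · rw [Psi_of_le ht]
    positivity
  · have hpos : 0 < 2 * t - 1 := by linarith
    have hexp : ((2 * t - 1) ^ 2)⁻¹ ≤ Real.exp ((2 * t - 1) ^ 2)⁻¹ := by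
      linarith [Real.add_one_le_exp ((2 * t - 1) ^ 2)⁻¹]
    rw [Psi_of_lt ht, one_div, Real.exp_sub, div_eq_mul_inv]
    gcongr
    exact inv_le_of_inv_le₀ (by positivity) hexp

theorem hasDerivAt_Psi_of_le (ht : t ≤ 1 / 2) : HasDerivAt Psi 0 t := by
  have hquad : Psi =O[nhds t] fun y => ‖y - t‖ ^ 2 := by
    refine .of_bound (4 * Real.exp 1) (.of_forall fun y => ?_)
    rw [Real.norm_of_nonneg (Psi_nonneg y), Real.norm_of_nonneg (by positivity), Real.norm_eq_abs,
      sq_abs]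
    rcases le_or_gt y (1 / 2) with hy | hy
    · rw [Psi_of_le hy]
      positivity
    · calc Psi y ≤ Real.exp 1 * (2 * y - 1) ^ 2 := Psi_le_mul_sq y
        _ ≤ Real.exp 1 * (2 * (y - t)) ^ 2 := by gcongr <;> linarith
        _ = 4 * Real.exp 1 * (y - t) ^ 2 := by ring
  simpa using (hquad.hasFDerivAt (𝕜 := ℝ) one_lt_two).hasDerivAt

theorem hasDerivAt_Psi_of_lt (ht : 1 / 2 < t) :
    HasDerivAt Psi (Real.exp (1 - 1 / (2 * t - 1) ^ 2) * (4 / (2 * t - 1) ^ 3)) t := by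
  have hne : 2 * t - 1 ≠ 0 := by linarith
  have haffine : HasDerivAt (fun y : ℝ => 2 * y - 1) 2 t := by
    simpa using ((hasDerivAt_id t).const_mul 2).sub_const 1
  have hexponent : HasDerivAt (fun y : ℝ => 1 - 1 / (2 * y - 1) ^ 2) (4 / (2 * t - 1) ^ 3) t := by
    simp only [one_div]
    refine (((haffine.fun_pow 2).fun_inv (pow_ne_zero 2 hne)).const_sub 1).congr_deriv ?_
    field_simp
    ring
  refine hexponent.exp.congr_of_eventuallyEq ?_
  filter_upwards [Ioi_mem_nhds ht] with y hy using Psi_of_lt hy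

theorem differentiable_Psi : Differentiable ℝ Psi := fun t =>
  (le_or_gt t (1 / 2)).elim (fun ht => (hasDerivAt_Psi_of_le ht).differentiableAt)
    fun ht => (hasDerivAt_Psi_of_lt ht).differentiableAt

theorem sq_deriv_Psi_le (t : ℝ) : deriv Psi t ^ 2 ≤ 54 * Real.exp (-1) := by
  rcases le_or_gt t (1 / 2) with ht | ht
  · rw [(hasDerivAt_Psi_of_le ht).deriv, zero_pow two_ne_zero]
    positivity
  · have hpos : 0 < 2 * t - 1 := by linarith
    set y : ℝ := 2 / 3 * (1 / (2 * t - 1) ^ 2) with hy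
    have hexponent : 1 - 1 / (2 * t - 1) ^ 2 = 1 - 3 / 2 * y := by rw [hy]; ring
    have hcube : (4 / (2 * t - 1) ^ 3) ^ 2 = 54 * y ^ 3 := by rw [hy]; field_simp; norm_num
    rw [(hasDerivAt_Psi_of_lt ht).deriv, hexponent]
    calc (Real.exp (1 - 3 / 2 * y) * (4 / (2 * t - 1) ^ 3)) ^ 2
        = 54 * (Real.exp 2 * (y * Real.exp (-y)) ^ 3) := by
          rw [mul_pow, mul_pow, hcube, ← Real.exp_nat_mul, ← Real.exp_nat_mul, mul_left_comm,
            mul_left_comm (Real.exp 2), ← Real.exp_add]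
          ring_nf
      _ ≤ 54 * (Real.exp 2 * Real.exp (-1) ^ 3) := by
          gcongr
          exact Real.mul_exp_neg_le_exp_neg_one y
      _ = 54 * Real.exp (-1) := by
          rw [← Real.exp_nat_mul, ← Real.exp_add]
          norm_num

end Psi

section Phi

theorem hasDerivAt_integral_Iic {E : Type*} [NormedAddCommGroup E] [NormedSpace ℝ E]
    [CompleteSpace E] {f : ℝ → E} {t : ℝ} (hf : Integrable f) (ht : ContinuousAt f t) :
    HasDerivAt (fun s => ∫ τ in Set.Iic s, f τ) (f t) t := by
  have hsplit : (fun s => ∫ τ in Set.Iic s, f τ) =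
      fun s => (∫ τ in t..s, f τ) + ∫ τ in Set.Iic t, f τ := by
    ext s
    rw [← intervalIntegral.integral_Iic_sub_Iic hf.integrableOn hf.integrableOn, sub_add_cancel]
  rw [hsplit]
  exact (intervalIntegral.integral_hasDerivAt_right hf.intervalIntegrable
    hf.aestronglyMeasurable.stronglyMeasurableAtFilter ht).add_const _

theorem integrable_exp_neg_sq_div_two : Integrable fun τ : ℝ => Real.exp (-τ ^ 2 / 2) := by
  convert integrable_exp_neg_mul_sq one_half_pos using 3
  ring

theorem integral_exp_neg_sq_div_two : ∫ τ : ℝ, Real.exp (-τ ^ 2 / 2) = √(2 * Real.pi) := by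
  convert integral_gaussian (1 / 2) using 4 <;> ring

theorem hasDerivAt_Phi (t : ℝ) : HasDerivAt Phi (√(Real.exp 1) * Real.exp (-t ^ 2 / 2)) t :=
  (hasDerivAt_integral_Iic integrable_exp_neg_sq_div_two (by fun_prop)).const_mul _

theorem differentiable_Phi : Differentiable ℝ Phi := fun t =>
  (hasDerivAt_Phi t).differentiableAt

theorem abs_deriv_Phi_le (t : ℝ) : |deriv Phi t| ≤ √(Real.exp 1) := by
  rw [(hasDerivAt_Phi t).deriv, abs_of_nonneg (by positivity)]
  refine mul_le_of_le_one_right (Real.sqrt_nonneg _) (Real.exp_le_one_iff.2 ?_)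
  linarith [sq_nonneg t]

theorem abs_Phi_le (t : ℝ) : |Phi t| ≤ √(2 * Real.pi * Real.exp 1) := by
  have hnonneg : ∀ τ : ℝ, 0 ≤ Real.exp (-τ ^ 2 / 2) := fun τ => (Real.exp_pos _).le
  rw [Phi, abs_of_nonneg (mul_nonneg (Real.sqrt_nonneg _) (integral_nonneg hnonneg)), mul_comm,
    Real.sqrt_mul (by positivity), ← integral_exp_neg_sq_div_two]
  exact mul_le_mul_of_nonneg_right
    (setIntegral_le_integral integrable_exp_neg_sq_div_two (.of_forall hnonneg))
    (Real.sqrt_nonneg _)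

end Phi

theorem abs_Psi_mul_deriv_Phi_le (a b : ℝ) :
    |Psi a * deriv Phi b| ≤ Real.exp 1 * √(Real.exp 1) := by
  rw [abs_mul, abs_of_nonneg (Psi_nonneg a)]
  gcongr
  exacts [Psi_le_exp_one a, abs_deriv_Phi_le b]

theorem abs_deriv_Psi_mul_Phi_le (a b : ℝ) : |deriv Psi a * Phi b| ≤ √(108 * Real.pi) := by
  calc |deriv Psi a * Phi b| ≤ √(54 * Real.exp (-1)) * √(2 * Real.pi * Real.exp 1) := by
        rw [abs_mul]
        gcongr
        exacts [Real.abs_le_sqrt (sq_deriv_Psi_le a), abs_Phi_le b]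
    _ = √(108 * Real.pi) := by
        rw [← Real.sqrt_mul (by positivity)]
        congr 1
        rw [Real.exp_neg]
        field_simp
        norm_num

theorem abs_symmProd_Psi_deriv_Phi_le (a b : ℝ) :
    |symmProd Psi (deriv Phi) a b| ≤ Real.exp 1 * √(Real.exp 1) :=
  abs_symmProd_le (fun _ ht => Psi_of_le (ht.trans one_half_pos.le)) abs_Psi_mul_deriv_Phi_le a b

theorem abs_symmProd_deriv_Psi_Phi_le (a b : ℝ) :
    |symmProd (deriv Psi) Phi a b| ≤ √(108 * Real.pi) :=
  abs_symmProd_le (fun _ ht => (hasDerivAt_Psi_of_le (ht.trans one_half_pos.le)).deriv)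
    abs_deriv_Psi_mul_Phi_le a b

theorem exp_one_mul_sqrt_add_sqrt_mul_pi_le :
    Real.exp 1 * √(Real.exp 1) + √(108 * Real.pi) ≤ 23 := by
  have he := Real.exp_one_lt_d9
  have hsqrt_e : √(Real.exp 1) ≤ 1.65 := Real.sqrt_le_iff.2 ⟨by norm_num, by linarith⟩
  have hsqrt_pi : √(108 * Real.pi) ≤ 18.45 :=
    Real.sqrt_le_iff.2 ⟨by norm_num, by linarith [Real.pi_lt_d4]⟩
  calc Real.exp 1 * √(Real.exp 1) + √(108 * Real.pi) ≤ 2.7182818286 * 1.65 + 18.45 := by gcongr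
    _ ≤ 23 := by norm_num

section Gradient

variable {T : ℕ}

theorem chainF_eq_sum_chainLink (x : EuclideanSpace ℝ (Fin (T + 1))) :
    chainF T x = chainLink Psi Phi 1 (x 0) +
      ∑ i : Fin T, chainLink Psi Phi (x i.castSucc) (x i.succ) := by
  simp [chainF, chainLink, Psi_of_le (show (-1 : ℝ) ≤ 1 / 2 by norm_num)]

/-- The derivatives of the links with respect to their second argument: entry `i` comes from the
link entering coordinate `i`, the one entering coordinate `0` having first argument `1`. -/
noncomputable def incomingPartial (x : EuclideanSpace ℝ (Fin (T + 1))) : Fin (T + 1) → ℝ :=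
  Fin.cons (-symmProd Psi (deriv Phi) 1 (x 0))
    fun i : Fin T => -symmProd Psi (deriv Phi) (x i.castSucc) (x i.succ)

/-- The derivatives of the links with respect to their first argument: entry `i` comes from the
link leaving coordinate `i`, and is `0` at the last coordinate, which no link leaves. -/
noncomputable def outgoingPartial (x : EuclideanSpace ℝ (Fin (T + 1))) : Fin (T + 1) → ℝ :=
  Fin.snoc (fun i : Fin T => -symmProd (deriv Psi) Phi (x i.castSucc) (x i.succ)) 0

theorem sum_mul_incomingPartial (x : EuclideanSpace ℝ (Fin (T + 1))) (v : Fin (T + 1) → ℝ) :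
    ∑ i, v i * incomingPartial x i =
      v 0 * -symmProd Psi (deriv Phi) 1 (x 0) +
        ∑ i : Fin T, v i.succ * -symmProd Psi (deriv Phi) (x i.castSucc) (x i.succ) := by
  simp only [Fin.sum_univ_succ, incomingPartial, Fin.cons_zero, Fin.cons_succ]

theorem sum_mul_outgoingPartial (x : EuclideanSpace ℝ (Fin (T + 1))) (v : Fin (T + 1) → ℝ) :
    ∑ i, v i * outgoingPartial x i =
      ∑ i : Fin T, v i.castSucc * -symmProd (deriv Psi) Phi (x i.castSucc) (x i.succ) := by
  simp only [Fin.sum_univ_castSucc, outgoingPartial, Fin.snoc_castSucc, Fin.snoc_last, mul_zero,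
    add_zero]

theorem hasGradientAt_chainF (x : EuclideanSpace ℝ (Fin (T + 1))) :
    HasGradientAt (chainF T) (WithLp.toLp 2 (incomingPartial x + outgoingPartial x)) x := by
  have hcoord (j : Fin (T + 1)) :
      HasFDerivAt (fun y : EuclideanSpace ℝ (Fin (T + 1)) => y j)
        (EuclideanSpace.proj j : EuclideanSpace ℝ (Fin (T + 1)) →L[ℝ] ℝ) x :=
    (EuclideanSpace.proj (𝕜 := ℝ) j).hasFDerivAt
  have hfirst := hasFDerivAt_chainLink differentiable_Psi differentiable_Phi
    (hasFDerivAt_const 1 x) (hcoord 0)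
  have hlink (i : Fin T) := hasFDerivAt_chainLink differentiable_Psi differentiable_Phi
    (hcoord i.castSucc) (hcoord i.succ)
  rw [hasGradientAt_iff_hasFDerivAt, funext chainF_eq_sum_chainLink]
  refine (hfirst.add (HasFDerivAt.fun_sum fun i _ => hlink i)).congr_fderiv ?_
  ext v
  simp only [InnerProductSpace.toDual_apply_apply, PiLp.inner_apply, RCLike.inner_apply,
    conj_trivial, Pi.add_apply, mul_add, Finset.sum_add_distrib, sum_mul_incomingPartial,
    sum_mul_outgoingPartial]
  simp [Finset.sum_add_distrib, mul_comm, add_assoc]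

theorem abs_incomingPartial_le (x : EuclideanSpace ℝ (Fin (T + 1))) (i : Fin (T + 1)) :
    |incomingPartial x i| ≤ Real.exp 1 * √(Real.exp 1) := by
  cases i using Fin.cases <;>
    simpa [incomingPartial] using abs_symmProd_Psi_deriv_Phi_le _ _

theorem abs_outgoingPartial_le (x : EuclideanSpace ℝ (Fin (T + 1))) (i : Fin (T + 1)) :
    |outgoingPartial x i| ≤ √(108 * Real.pi) := by
  cases i using Fin.lastCases with
  | last => simp [outgoingPartial]
  | cast i => simpa [outgoingPartial] using abs_symmProd_deriv_Psi_Phi_le _ _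

end Gradient

/-- The gradient of the chain function `F_T` is bounded by `23` in the
sup norm: every coordinate of `∇F_T(x)` has absolute value at most `23` (stated for
dimension `T + 1`, i.e. for every paper dimension `T ≥ 1`). -/
theorem chainF_gradient_sup_norm_le (T : ℕ) :
    ∀ x : EuclideanSpace ℝ (Fin (T + 1)), ∀ i : Fin (T + 1),
      |gradient (chainF T) x i| ≤ 23 := by
  intro x i
  rw [(hasGradientAt_chainF x).gradient]
  calc |incomingPartial x i + outgoingPartial x i|
      ≤ |incomingPartial x i| + |outgoingPartial x i| := abs_add_le _ _
    _ ≤ Real.exp 1 * √(Real.exp 1) + √(108 * Real.pi) :=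
        add_le_add (abs_incomingPartial_le x i) (abs_outgoingPartial_le x i)
    _ ≤ 23 := exp_one_mul_sqrt_add_sqrt_mul_pi_le
end

section
/- Let Γ : ℝ → [0,1] be nondecreasing with Γ(t) = 0 for t ≤ 1/4 and Γ(t) = 1 for t ≥ 1/2. For x ∈ ℝ^T and i ∈ {1, …, T}, define Θ_i(x) = Γ( 1 − ‖(Γ(|x_i|), Γ(|x_{i+1}|), …, Γ(|x_T|))‖₂ ), where ‖·‖₂ is the Euclidean norm. Then for all x ∈ ℝ^T and all i, 𝟙{ i > prog_{1/4}(x) } ≤ Θ_i(x) ≤ 𝟙{ i > prog_{1/2}(x) }. -/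
/-!
The condition `i > prog_α(x)` says that every coordinate of `x` from `i` on has absolute value at
most `α`. When this holds for `α = 1/4`, the vector `(Γ |x_i|, …, Γ |x_T|)` vanishes and
`Θ_i(x) = Γ 1 = 1`. When it fails for `α = 1/2`, some entry of that vector is `1`, so its norm is
at least `1` and `Θ_i(x) = 0`.
-/

lemma prog_lt_add_one_iff {n : ℕ} {α : ℝ} {x : EuclideanSpace ℝ (Fin n)} {i : Fin n} :
    prog α x < (i : ℕ) + 1 ↔ ∀ j, i ≤ j → |x j| ≤ α := by
  rw [prog, Finset.sup_lt_iff (Nat.add_one_pos _)]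
  simp only [Finset.mem_filter_univ]
  exact forall_congr' fun j => by
    rw [← not_imp_not, not_lt, not_lt, Nat.add_le_add_iff_right, Fin.val_fin_le]

section Theta

variable {ι : Type*} [Fintype ι] [LE ι] [DecidableLE ι] {Γ : ℝ → ℝ} {x : ι → ℝ} {i j : ι}

/-- The quantity `Θ_i(x) = Γ(1 − ‖(Γ |x_j|)_{j ≥ i}‖₂)`, which is meant to detect whether all
coordinates of `x` from `i` on are small. The indices may come from any finite ordered type, and
the Euclidean norm of the tail is written out as the square root of a sum over `j ≥ i`. -/
noncomputable def theta (Γ : ℝ → ℝ) (x : ι → ℝ) (i : ι) : ℝ :=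
  Γ (1 - √(∑ j with i ≤ j, Γ |x j| ^ 2))

lemma theta_eq_of_forall_eq_zero (h : ∀ j, i ≤ j → Γ |x j| = 0) : theta Γ x i = Γ 1 := by
  have tail_sum : ∑ j with i ≤ j, Γ |x j| ^ 2 = 0 :=
    Finset.sum_eq_zero fun j hj => by rw [h j ((Finset.mem_filter_univ j).mp hj), sq, zero_mul]
  rw [theta, tail_sum, Real.sqrt_zero, sub_zero]

lemma le_sqrt_tail_sum (Γ : ℝ → ℝ) (x : ι → ℝ) (hij : i ≤ j) :
    Γ |x j| ≤ √(∑ k with i ≤ k, Γ |x k| ^ 2) :=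
  Real.le_sqrt_of_sq_le <|
    Finset.single_le_sum (f := fun k => Γ |x k| ^ 2) (fun _ _ => sq_nonneg _)
      ((Finset.mem_filter_univ j).mpr hij)

lemma theta_eq_zero_of_one_le (hΓ : ∀ t ≤ 0, Γ t = 0) (hij : i ≤ j) (hj : 1 ≤ Γ |x j|) :
    theta Γ x i = 0 :=
  hΓ _ <| sub_nonpos.mpr <| hj.trans <| le_sqrt_tail_sum Γ x hij

end Theta

section Bounds

variable {n : ℕ} {Γ : ℝ → ℝ} {x : EuclideanSpace ℝ (Fin n)} {i : Fin n}

lemma theta_eq_of_prog_lt {a : ℝ} (hΓ0 : ∀ t ≤ a, Γ t = 0) (hi : prog a x < (i : ℕ) + 1) :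
    theta Γ x i = Γ 1 :=
  theta_eq_of_forall_eq_zero fun j hij => hΓ0 _ (prog_lt_add_one_iff.mp hi j hij)

lemma theta_eq_zero_of_le_prog {b : ℝ} (hΓ0 : ∀ t ≤ 0, Γ t = 0) (hΓ1 : ∀ t, b ≤ t → 1 ≤ Γ t)
    (hi : (i : ℕ) + 1 ≤ prog b x) : theta Γ x i = 0 := by
  obtain ⟨j, hij, hj⟩ : ∃ j, i ≤ j ∧ b < |x j| := by
    simpa only [prog_lt_add_one_iff, not_forall, exists_prop, not_le] using hi.not_gt
  exact theta_eq_zero_of_one_le hΓ0 hij (hΓ1 _ hj.le)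

theorem theta_indicator_bounds_general {a b : ℝ} (ha : 0 ≤ a) (hb : b ≤ 1)
    (hΓmem : ∀ t, Γ t ∈ Set.Icc (0 : ℝ) 1) (hΓ0 : ∀ t ≤ a, Γ t = 0) (hΓ1 : ∀ t, b ≤ t → Γ t = 1)
    (x : EuclideanSpace ℝ (Fin n)) (i : Fin n) :
    (if prog a x < (i : ℕ) + 1 then (1 : ℝ) else 0) ≤ theta Γ x i ∧
      theta Γ x i ≤ (if prog b x < (i : ℕ) + 1 then (1 : ℝ) else 0) := by
  have theta_mem : theta Γ x i ∈ Set.Icc (0 : ℝ) 1 := hΓmem _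
  constructor
  · split_ifs with hi
    · exact ((theta_eq_of_prog_lt hΓ0 hi).trans (hΓ1 1 hb)).ge
    · exact theta_mem.1
  · split_ifs with hi
    · exact theta_mem.2
    · exact (theta_eq_zero_of_le_prog (fun t ht => hΓ0 t (ht.trans ha))
        (fun t ht => (hΓ1 t ht).ge) (not_lt.mp hi)).le

end Bounds

/-- For a nondecreasing `Γ : ℝ → [0,1]` vanishing on `(−∞,1/4]` and
equal to `1` on `[1/2,∞)`, the quantity
`Θ_i(x) = Γ(1 − ‖(Γ(|x_i|), …, Γ(|x_T|))‖₂)` is sandwiched between the indicators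
`𝟙{i > prog_{1/4}(x)}` and `𝟙{i > prog_{1/2}(x)}`.  (Coordinates of `x ∈ ℝ^T` are
indexed by `Fin T`; the paper's one-based index of `i : Fin T` is `(i : ℕ) + 1`.) -/
theorem theta_indicator_bounds
    (T : ℕ) (Γ : ℝ → ℝ)
    (hΓmem : ∀ t, Γ t ∈ Set.Icc (0 : ℝ) 1)
    (hΓmono : Monotone Γ)
    (hΓ0 : ∀ t : ℝ, t ≤ 1 / 4 → Γ t = 0)
    (hΓ1 : ∀ t : ℝ, 1 / 2 ≤ t → Γ t = 1)
    (x : EuclideanSpace ℝ (Fin T)) (i : Fin T) :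
    (if prog (1 / 4) x < (i : ℕ) + 1 then (1 : ℝ) else 0)
        ≤ Γ (1 - Real.sqrt (∑ j ∈ Finset.univ.filter fun j : Fin T => i ≤ j,
              Γ |x j| ^ 2))
      ∧ Γ (1 - Real.sqrt (∑ j ∈ Finset.univ.filter fun j : Fin T => i ≤ j,
              Γ |x j| ^ 2))
        ≤ (if prog (1 / 2) x < (i : ℕ) + 1 then (1 : ℝ) else 0) :=
  theta_indicator_bounds_general (by norm_num) (by norm_num) hΓmem hΓ0 hΓ1 x i
end
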